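/- arXiv:0807.3175 — 5 statements merged into one kernel-verified Lean document; each statement's English description precedes it below -/
import Mathlib

section
/- Let d ≥ 2, let G be a transitive subgroup of the symmetric group Σ_d on Ω_d = {1,…,d}, and let α ∈ G have disjoint cycle decomposition (including fixed points as cycles of length 1) with cycles of lengths n_1,…,n_l and supports S^1,…,S^l (so S^1,…,S^l partition Ω_d). Suppose A is a proper subset of Ω_d such that there exist distinct s, t ∈ {1,…,l} with gcd(n_s, n_t) = 1, ∅ ≠ S^s \ A ⊊ S^s, and S^t ∩ A ≠ ∅. Then A is not a block for G. -/
/-- `A` is a block for the subgroup `G` of permutations of `Fin d`: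
for every `γ ∈ G`, either `γA = A` or `γA ∩ A = ∅`. -/
def IsBlockFor {d : ℕ} (G : Subgroup (Equiv.Perm (Fin d))) (A : Set (Fin d)) : Prop :=
  ∀ g ∈ G, g '' A = A ∨ (g '' A) ∩ A = ∅

/-- The subgroup `G` of permutations of `Fin d` is transitive. -/
def IsTransitiveSub {d : ℕ} (G : Subgroup (Equiv.Perm (Fin d))) : Prop :=
  ∀ i j : Fin d, ∃ g ∈ G, g i = j

/-- `S 1, …, S l` are the supports of the disjoint cycles of `α` (counting each fixed
point as a cycle of length 1), i.e. the `S i` are exactly the orbits of `⟨α⟩`, each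
listed exactly once, and they partition `Fin d`. -/
def IsCycleDecompOn {d l : ℕ} (α : Equiv.Perm (Fin d)) (S : Fin l → Set (Fin d)) : Prop :=
  (∀ x : Fin d, ∃! i : Fin l, x ∈ S i) ∧
  ∀ i : Fin l, ∃ a : Fin d, S i = {x : Fin d | ∃ k : ℕ, (α ^ k) a = x}

/-!
If a block `A` contains a point `x`, then every power of `g` fixing `x` maps `A` to a set meeting
`A`, hence to `A` itself; so the period of `A` under `g` divides the length of the cycle of `g`
through `x`. When `A` meets two cycles of coprime lengths, its period is therefore `1`: `A` is
invariant under `g` and contains every cycle it meets, whereas it contains only part of `S s`.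
-/

open MulAction Subgroup

open scoped Pointwise

section MulAction

variable {G X : Type*} [Group G] [MulAction G X] {g : G} {x y : X} {A S T : Set X}

theorem period_eq_ncard_orbit_zpowers (g : G) (x : X) :
    period g x = (orbit (zpowers g) x).ncard := by
  rw [← Nat.card_coe_set_eq, Nat.card_congr (orbitZPowersEquiv g x), Nat.card_zmod,
    period_eq_minimalPeriod]

theorem orbit_zpowers_eq_setOf_pow_smul (hg : IsOfFinOrder g) (x : X) :
    orbit (zpowers g) x = {y | ∃ k : ℕ, g ^ k • x = y} := by
  ext y
  constructor
  · rintro ⟨⟨h, hh⟩, rfl⟩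
    obtain ⟨k, rfl⟩ := hg.mem_powers_iff_mem_zpowers.2 hh
    exact ⟨k, rfl⟩
  · rintro ⟨k, rfl⟩
    exact ⟨⟨g ^ k, npow_mem_zpowers g k⟩, rfl⟩

theorem orbit_zpowers_subset_of_smul_eq (hgA : g • A = A) (hx : x ∈ A) :
    orbit (zpowers g) x ⊆ A := by
  have hle : zpowers g ≤ stabilizer G A := zpowers_le.2 hgA
  rintro _ ⟨⟨h, hh⟩, rfl⟩
  exact (hle hh : h • A = A) ▸ Set.smul_mem_smul_set hx

theorem period_dvd_period_of_isBlock (hA : IsBlock G A) (hx : x ∈ A) (g : G) :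
    period g A ∣ period g x :=
  pow_smul_eq_iff_period_dvd.1 (hA.stabilizer_le hx (pow_period_smul g x))

theorem smul_eq_of_isBlock_of_coprime_period (hA : IsBlock G A) (hx : x ∈ A) (hy : y ∈ A)
    (hcop : (period g x).Coprime (period g y)) : g • A = A :=
  period_eq_one_iff.1 <| Nat.eq_one_of_dvd_coprimes hcop
    (period_dvd_period_of_isBlock hA hx g) (period_dvd_period_of_isBlock hA hy g)

-- An infinite orbit has `ncard = 0`; coprimality then says that the other orbit is a fixed point.
theorem fundamental_lemma_general (hS : S ∈ Set.range (orbit (zpowers g)))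
    (hT : T ∈ Set.range (orbit (zpowers g))) (hcop : S.ncard.Coprime T.ncard)
    (hSdiff : (S \ A).Nonempty) (hSA : (S ∩ A).Nonempty) (hTA : (T ∩ A).Nonempty) :
    ¬ IsBlock G A := by
  obtain ⟨a, rfl⟩ := hS
  obtain ⟨b, rfl⟩ := hT
  obtain ⟨x, hxS, hxA⟩ := hSA
  obtain ⟨y, hyT, hyA⟩ := hTA
  rw [← orbit_eq_iff.2 hxS, ← orbit_eq_iff.2 hyT, ← period_eq_ncard_orbit_zpowers,
    ← period_eq_ncard_orbit_zpowers] at hcop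
  rw [← orbit_eq_iff.2 hxS] at hSdiff
  intro hA
  have hgA : g • A = A := smul_eq_of_isBlock_of_coprime_period hA hxA hyA hcop
  exact Set.sdiff_nonempty.1 hSdiff (orbit_zpowers_subset_of_smul_eq hgA hxA)

end MulAction

section Perm

variable {d l : ℕ} {G : Subgroup (Equiv.Perm (Fin d))}

theorem IsBlockFor.isBlock {A : Set (Fin d)} (hA : IsBlockFor G A) : IsBlock G A :=
  isBlock_iff_smul_eq_or_disjoint.2 fun g =>
    (hA g g.2).imp_right Set.disjoint_iff_inter_eq_empty.2

theorem IsCycleDecompOn.mem_range_orbit {α : Equiv.Perm (Fin d)} {S : Fin l → Set (Fin d)}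
    (hS : IsCycleDecompOn α S) (hα : α ∈ G) (i : Fin l) :
    S i ∈ Set.range (orbit (zpowers (⟨α, hα⟩ : G))) := by
  obtain ⟨a, ha⟩ := hS.2 i
  exact ⟨a, (orbit_zpowers_eq_setOf_pow_smul (isOfFinOrder_of_finite _) a).trans ha.symm⟩

end Perm

theorem fundamental_lemma {d l : ℕ} (hd : 2 ≤ d)
    (G : Subgroup (Equiv.Perm (Fin d))) (hG : IsTransitiveSub G)
    (α : Equiv.Perm (Fin d)) (hα : α ∈ G)
    (S : Fin l → Set (Fin d)) (n : Fin l → ℕ)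
    (hdecomp : IsCycleDecompOn α S) (hcard : ∀ i, (S i).ncard = n i)
    (A : Set (Fin d)) (hAproper : A ≠ Set.univ)
    (s t : Fin l) (hst : s ≠ t) (hcop : Nat.gcd (n s) (n t) = 1)
    (h1 : (S s \ A).Nonempty) (h2 : S s \ A ⊂ S s) (h3 : (S t ∩ A).Nonempty) :
    ¬ IsBlockFor G A :=
  fun hA => fundamental_lemma_general (hdecomp.mem_range_orbit hα s) (hdecomp.mem_range_orbit hα t)
    (by rwa [hcard, hcard]) h1 (Set.sdiff_ssubset_left_iff.1 h2) h3 hA.isBlock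
end

section
/- Let n_1 and n_2 be positive integers with gcd(n_1, n_2) = 1 and d = n_1 + n_2. If G is a transitive subgroup of the symmetric group Σ_d on Ω_d = {1,…,d} containing a permutation α whose disjoint cycle decomposition (counting fixed points as cycles of length 1) consists of exactly two cycles, of lengths n_1 and n_2, then G is primitive. -/
/-- The subgroup `G` of permutations of `Fin d` is primitive: it is transitive and its
only blocks are `∅`, singletons and the whole set. -/
def IsPrimitiveSub {d : ℕ} (G : Subgroup (Equiv.Perm (Fin d))) : Prop :=
  IsTransitiveSub G ∧
    ∀ A : Set (Fin d), IsBlockFor G A → A = ∅ ∨ (∃ a, A = {a}) ∨ A = Set.univ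

/-!
Let `H` be a subgroup with exactly two orbits, of coprime sizes, of a transitive group `G`, and let
`B` be a nonempty block for `G`. The translates under `H` of a block meeting an `H`-orbit cut that
orbit into pieces of equal size, so both the size of a piece and the number of translates divide the
size of the orbit. If some translate of `B` meets both orbits, the number of its translates under
`H` divides two coprime numbers, so this translate is `H`-invariant and is everything. Otherwise
every translate of `B` lies in a single orbit, so the size of `B` divides two coprime numbers, and
`B` is a singleton.
-/

open MulAction
open scoped Pointwise

section Blocks

variable {G X : Type*} [Group G] [MulAction G X] {B : Set X} {x y : X}

theorem orbit_stabilizer_eq_inter_orbit (hB : IsBlock G B) (hx : x ∈ B) :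
    orbit (stabilizer G B) x = B ∩ orbit G x := by
  ext z
  constructor
  · rintro ⟨⟨g, hg⟩, rfl⟩
    exact ⟨hg.subset (Set.smul_mem_smul_set hx), mem_orbit x g⟩
  · rintro ⟨hz, g, rfl⟩
    exact ⟨⟨g, hB.smul_eq_of_mem hx hz⟩, rfl⟩

theorem ncard_inter_orbit_mul_index_stabilizer (hB : IsBlock G B)
    (hBx : (B ∩ orbit G x).Nonempty) :
    (B ∩ orbit G x).ncard * (stabilizer G B).index = (orbit G x).ncard := by
  obtain ⟨z, hz, hzx⟩ := hBx
  have ncard_inter : (B ∩ orbit G z).ncard = (stabilizer G z).relIndex (stabilizer G B) := by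
    rw [← orbit_stabilizer_eq_inter_orbit hB hz, ← index_stabilizer]
    rfl
  rw [← orbit_eq_iff.2 hzx, ncard_inter, Subgroup.relIndex_mul_index (hB.stabilizer_le hz),
    index_stabilizer]

theorem isFixedBlock_of_coprime_ncard_orbit (hB : IsBlock G B)
    (hcop : (orbit G x).ncard.Coprime (orbit G y).ncard)
    (hBx : (B ∩ orbit G x).Nonempty) (hBy : (B ∩ orbit G y).Nonempty) : IsFixedBlock G B := by
  have index_eq_one : (stabilizer G B).index = 1 := Nat.eq_one_of_dvd_coprimes hcop
    (Dvd.intro_left _ (ncard_inter_orbit_mul_index_stabilizer hB hBx))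
    (Dvd.intro_left _ (ncard_inter_orbit_mul_index_stabilizer hB hBy))
  intro g
  rw [← mem_stabilizer_iff, Subgroup.index_eq_one.1 index_eq_one]
  exact Subgroup.mem_top g

theorem orbit_subset_of_isFixedBlock (hB : IsFixedBlock G B) (hBx : (B ∩ orbit G x).Nonempty) :
    orbit G x ⊆ B := by
  obtain ⟨z, hz, hzx⟩ := hBx
  rw [← orbit_eq_iff.2 hzx]
  rintro _ ⟨g, rfl⟩
  exact (hB g).subset (Set.smul_mem_smul_set hz)

theorem ncard_dvd_ncard_orbit_of_subset (hB : IsBlock G B) (hne : B.Nonempty)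
    (hsub : B ⊆ orbit G x) : B.ncard ∣ (orbit G x).ncard := by
  rw [← Set.inter_eq_left] at hsub
  rw [← ncard_inter_orbit_mul_index_stabilizer hB (hsub.symm ▸ hne), hsub]
  exact dvd_mul_right _ _

theorem ncard_dvd_ncard_orbit_of_translates_subset [IsPretransitive G X] (H : Subgroup G)
    (hB : IsBlock G B) (hne : B.Nonempty) (hsub : ∀ g : G, x ∈ g • B → g • B ⊆ orbit H x) :
    B.ncard ∣ (orbit H x).ncard := by
  obtain ⟨b, hb⟩ := hne
  obtain ⟨g, rfl⟩ := exists_smul_eq G b x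
  have hmem : g • b ∈ g • B := Set.smul_mem_smul_set hb
  rw [← Set.ncard_smul_set g B]
  exact ncard_dvd_ncard_orbit_of_subset (hB.translate g).subgroup ⟨_, hmem⟩ (hsub g hmem)

/- An infinite orbit has `ncard` equal to `0`; coprimality then makes the other orbit a point. -/
theorem l_eq_two_primitive_general [IsPretransitive G X] (H : Subgroup G)
    (hcover : orbit H x ∪ orbit H y = Set.univ)
    (hcop : (orbit H x).ncard.Coprime (orbit H y).ncard) : IsPreprimitive G X where
  isTrivialBlock_of_isBlock {B} hB := by
    obtain rfl | hne := B.eq_empty_or_nonempty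
    · exact Or.inl Set.subsingleton_empty
    by_cases hmeet : ∃ g : G, (g • B ∩ orbit H x).Nonempty ∧ (g • B ∩ orbit H y).Nonempty
    · obtain ⟨g, hgx, hgy⟩ := hmeet
      have hfixed : IsFixedBlock H (g • B) :=
        isFixedBlock_of_coprime_ncard_orbit (hB.translate g).subgroup hcop hgx hgy
      have translate_eq_univ : g • B = Set.univ := Set.univ_subset_iff.1 <| hcover ▸
        Set.union_subset (orbit_subset_of_isFixedBlock hfixed hgx)
          (orbit_subset_of_isFixedBlock hfixed hgy)
      exact (IsTrivialBlock.smul_iff g).1 (Or.inr translate_eq_univ)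
    · have mem_or_mem : ∀ z, z ∈ orbit H x ∨ z ∈ orbit H y := Set.eq_univ_iff_forall.1 hcover
      have subset_orbit_x (g : G) (hx : x ∈ g • B) : g • B ⊆ orbit H x := fun z hz =>
        (mem_or_mem z).resolve_right fun hzy =>
          hmeet ⟨g, ⟨x, hx, mem_orbit_self x⟩, ⟨z, hz, hzy⟩⟩
      have subset_orbit_y (g : G) (hy : y ∈ g • B) : g • B ⊆ orbit H y := fun z hz =>
        (mem_or_mem z).resolve_left fun hzx =>
          hmeet ⟨g, ⟨z, hz, hzx⟩, ⟨y, hy, mem_orbit_self y⟩⟩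
      have ncard_eq_one : B.ncard = 1 := Nat.eq_one_of_dvd_coprimes hcop
        (ncard_dvd_ncard_orbit_of_translates_subset H hB hne subset_orbit_x)
        (ncard_dvd_ncard_orbit_of_translates_subset H hB hne subset_orbit_y)
      obtain ⟨b, rfl⟩ := Set.ncard_eq_one.1 ncard_eq_one
      exact Or.inl Set.subsingleton_singleton

end Blocks

section PermFin

variable {d : ℕ} {G : Subgroup (Equiv.Perm (Fin d))}

theorem isBlockFor_iff_isBlock {A : Set (Fin d)} : IsBlockFor G A ↔ IsBlock G A := by
  simp only [isBlock_iff_smul_eq_or_disjoint, Set.disjoint_iff_inter_eq_empty, Subtype.forall]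
  rfl

theorem isTransitiveSub_iff_isPretransitive :
    IsTransitiveSub G ↔ IsPretransitive G (Fin d) := by
  simp only [IsTransitiveSub, isPretransitive_iff, Subtype.exists, Subgroup.mk_smul,
    Equiv.Perm.smul_def, exists_prop]

theorem IsPrimitiveSub.of_isPreprimitive (hG : IsPreprimitive G (Fin d)) : IsPrimitiveSub G := by
  refine ⟨isTransitiveSub_iff_isPretransitive.2 hG.toIsPretransitive, fun A hA => ?_⟩
  obtain hsub | huniv := hG.isTrivialBlock_of_isBlock (isBlockFor_iff_isBlock.1 hA)
  · exact hsub.eq_empty_or_singleton.imp_right Or.inl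
  · exact Or.inr (Or.inr huniv)

theorem IsCycleDecompOn.exists_eq_orbit {l : ℕ} {α : G} {S : Fin l → Set (Fin d)}
    (hS : IsCycleDecompOn (α : Equiv.Perm (Fin d)) S) (i : Fin l) :
    ∃ a, S i = orbit (Subgroup.zpowers α) a := by
  obtain ⟨a, ha⟩ := hS.2 i
  refine ⟨a, ha.trans (Set.ext fun z => ⟨?_, ?_⟩)⟩
  · rintro ⟨k, rfl⟩
    exact ⟨⟨α ^ k, Subgroup.npow_mem_zpowers α k⟩, rfl⟩
  · rintro ⟨⟨β, hβ⟩, rfl⟩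
    obtain ⟨k, rfl⟩ := mem_powers_iff_mem_zpowers.2 hβ
    exact ⟨k, rfl⟩

theorem IsCycleDecompOn.union_eq_univ {α : Equiv.Perm (Fin d)} {S : Fin 2 → Set (Fin d)}
    (hS : IsCycleDecompOn α S) : S 0 ∪ S 1 = Set.univ :=
  Set.eq_univ_of_forall fun z => Fin.exists_fin_two.1 (hS.1 z).exists

end PermFin

theorem l_eq_two_primitive {n₁ n₂ d : ℕ} (h₁ : 0 < n₁) (h₂ : 0 < n₂)
    (hcop : Nat.gcd n₁ n₂ = 1) (hd : d = n₁ + n₂)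
    (G : Subgroup (Equiv.Perm (Fin d))) (hG : IsTransitiveSub G)
    (α : Equiv.Perm (Fin d)) (hα : α ∈ G)
    (S : Fin 2 → Set (Fin d)) (hdecomp : IsCycleDecompOn α S)
    (hS0 : (S 0).ncard = n₁) (hS1 : (S 1).ncard = n₂) :
    IsPrimitiveSub G := by
  have : IsPretransitive G (Fin d) := isTransitiveSub_iff_isPretransitive.1 hG
  obtain ⟨x, hx⟩ := IsCycleDecompOn.exists_eq_orbit (α := ⟨α, hα⟩) hdecomp 0
  obtain ⟨y, hy⟩ := IsCycleDecompOn.exists_eq_orbit (α := ⟨α, hα⟩) hdecomp 1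
  exact .of_isPreprimitive <| l_eq_two_primitive_general (Subgroup.zpowers ⟨α, hα⟩)
    (hx ▸ hy ▸ hdecomp.union_eq_univ) (by rwa [← hx, ← hy, hS0, hS1])
end

section
/- Let n_1, n_2 > 1 be integers with gcd(n_1, n_2) = 1 and d = n_1 + n_2. If G is a transitive subgroup of the symmetric group Σ_d on Ω_d = {1,…,d} containing a permutation α whose disjoint cycle decomposition consists of exactly two cycles, of lengths n_1 and n_2, then G is either the full symmetric group Σ_d or the alternating group A_d. -/
/-!
Write `Γ` and `Γᶜ` for the two cycles of `α`. By the Chinese remainder theorem, powers of `α` act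
transitively on either cycle while fixing the other one pointwise. Among the translates `g • Γ ≠ Γ`
pick one for which `Γ \ g • Γ` is smallest: this difference is then a block for the pointwise
stabilizer of `Γᶜ`, and likewise `Γᶜ \ g • Γᶜ`, of the same size, is a block for the pointwise
stabilizer of `Γ`. So the size divides both cycle lengths and equals one, i.e. `G` contains an
element exchanging a single point of `Γ` for a single point of `Γᶜ`. Repeated exchanges carry `Γ` to
every set of its size. This makes `G` primitive, and yields a translate of the shorter cycle meeting
it in exactly one point. The commutator of the corresponding cyclic permutations is a 3-cycle, and
Jordan's theorem applies.
-/

open MulAction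
open scoped Pointwise commutatorElement

theorem mem_of_forall_exchange_mem {X : Type*} {𝓕 : Set (Set X)}
    (h𝓕 : ∀ A ∈ 𝓕, ∀ a ∈ A, ∀ b ∉ A, insert b (A \ {a}) ∈ 𝓕) {A B : Set X} (hA : A ∈ 𝓕)
    (hAfin : A.Finite) (hBfin : B.Finite) (hcard : A.ncard = B.ncard) : B ∈ 𝓕 := by
  induction hk : (B \ A).ncard generalizing A with
  | zero =>
    have hBA : B ⊆ A := by
      rwa [Set.ncard_eq_zero hBfin.sdiff, Set.sdiff_eq_empty] at hk
    rwa [Set.eq_of_subset_of_ncard_le hBA hcard.le hAfin]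
  | succ k ih =>
    obtain ⟨b, hbB, hbA⟩ : (B \ A).Nonempty := Set.nonempty_of_ncard_ne_zero (by omega)
    obtain ⟨a, haA, haB⟩ : (A \ B).Nonempty := by
      rw [Set.sdiff_nonempty]
      intro hAB
      exact hbA (Set.eq_of_subset_of_ncard_le hAB hcard.ge hBfin ▸ hbB)
    have hsdiff : B \ insert b (A \ {a}) = (B \ A) \ {b} := by grind
    refine ih (h𝓕 A hA a haA b hbA) (hAfin.sdiff.insert b)
      ((Set.ncard_exchange hbA haA).trans hcard) ?_
    rw [hsdiff, Set.ncard_sdiff_singleton_of_mem (show b ∈ B \ A from ⟨hbB, hbA⟩), hk,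
      Nat.add_sub_cancel]

section JordanSet

variable {G X : Type*} [Group G] [MulAction G X] {Γ : Set X}

variable (G) in
/-- `Γ` is a *Jordan set* for the action of `G` on `X`: the pointwise stabilizer of its complement
acts transitively on it. Subsets with at most one element are allowed. -/
def IsJordanSet (Γ : Set X) : Prop :=
  ∀ x ∈ Γ, ∀ y ∈ Γ, ∃ g ∈ fixingSubgroup G Γᶜ, g • x = y

theorem IsJordanSet.smul (hΓ : IsJordanSet G Γ) (g : G) : IsJordanSet G (g • Γ) := by
  rintro _ ⟨x, hx, rfl⟩ _ ⟨y, hy, rfl⟩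
  obtain ⟨h, hh, rfl⟩ := hΓ x hx y hy
  refine ⟨MulAut.conj g h, Set.conj_mem_fixingSubgroup Set.smul_set_compl hh, ?_⟩
  simp [mul_smul]

theorem smul_eq_of_mem_fixingSubgroup_compl {g : G} (hg : g ∈ fixingSubgroup G Γᶜ) :
    g • Γ = Γ := by
  simpa only [stabilizer_compl, mem_stabilizer_iff] using fixingSubgroup_le_stabilizer G Γᶜ hg

theorem IsJordanSet.orbit_fixingSubgroup_compl (hΓ : IsJordanSet G Γ) {x : X} (hx : x ∈ Γ) :
    orbit (fixingSubgroup G Γᶜ) x = Γ := by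
  apply Set.Subset.antisymm
  · rintro _ ⟨⟨g, hg⟩, rfl⟩
    exact (smul_eq_of_mem_fixingSubgroup_compl hg).subset (Set.smul_mem_smul_set hx)
  · intro y hy
    obtain ⟨g, hg, hgy⟩ := hΓ x hx y hy
    exact ⟨⟨g, hg⟩, hgy⟩

theorem IsJordanSet.ncard_dvd_of_isBlock (hΓ : IsJordanSet G Γ) {B : Set X}
    (hB : IsBlock (fixingSubgroup G Γᶜ) B) (hBne : B.Nonempty) (hBΓ : B ⊆ Γ) :
    B.ncard ∣ Γ.ncard := by
  obtain ⟨b, hb⟩ := hBne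
  have horbit := hΓ.orbit_fixingSubgroup_compl (hBΓ hb)
  let ι : orbit (fixingSubgroup G Γᶜ) b →[fixingSubgroup G Γᶜ] X := ⟨Subtype.val, fun _ _ => rfl⟩
  have hval : Subtype.val '' (ι ⁻¹' B) = B :=
    Set.image_preimage_eq_of_subset (by rwa [Subtype.range_val, horbit])
  have hdvd := (hB.preimage ι).ncard_dvd_card ⟨⟨b, mem_orbit_self b⟩, hb⟩
  rwa [← Set.ncard_image_of_injective _ Subtype.val_injective, hval, Nat.card_coe_set_eq,
    horbit] at hdvd

theorem isBlock_sdiff_smul_of_minimal [Finite X] {g : G}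
    (hmin : ∀ h : G, h • Γ ≠ Γ → (Γ \ g • Γ).ncard ≤ (Γ \ h • Γ).ncard) :
    IsBlock (fixingSubgroup G Γᶜ) (Γ \ g • Γ) := by
  rw [isBlock_iff_disjoint_smul_of_ne]
  rintro ⟨s, hs⟩ hsC
  change s • (Γ \ g • Γ) ≠ Γ \ g • Γ at hsC
  change Disjoint (s • (Γ \ g • Γ)) (Γ \ g • Γ)
  have hsΓ : s • Γ = Γ := smul_eq_of_mem_fixingSubgroup_compl hs
  rw [Set.smul_set_sdiff, hsΓ] at hsC ⊢
  have hmoved : (g⁻¹ * s * g) • Γ ≠ Γ := by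
    intro h
    rw [mul_assoc, mul_smul, inv_smul_eq_iff, mul_smul] at h
    exact hsC (by rw [h])
  have hcard : ((g • Γ) \ (s • g • Γ)).ncard = (Γ \ (g⁻¹ * s * g) • Γ).ncard := by
    rw [← Set.ncard_smul_set g (Γ \ (g⁻¹ * s * g) • Γ), Set.smul_set_sdiff]
    simp only [mul_smul, smul_inv_smul]
  have hsub : (g • Γ) \ (s • g • Γ) ⊆ (Γ \ s • g • Γ) \ (Γ \ g • Γ) := by
    rintro x ⟨hx, hxs⟩
    refine ⟨⟨?_, hxs⟩, fun h => h.2 hx⟩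
    by_contra hxΓ
    exact hxs ⟨x, hx, (mem_fixingSubgroup_iff G).mp hs x hxΓ⟩
  have hcardC : (Γ \ s • g • Γ).ncard = (Γ \ g • Γ).ncard := by
    rw [← Set.ncard_smul_set s (Γ \ g • Γ), Set.smul_set_sdiff, hsΓ]
  -- Minimality of `g` leaves no room for the translate to meet the original difference.
  rw [← sdiff_eq_left]
  refine Set.eq_of_subset_of_ncard_le Set.sdiff_subset ?_
  calc (Γ \ s • g • Γ).ncard = (Γ \ g • Γ).ncard := hcardC
    _ ≤ (Γ \ (g⁻¹ * s * g) • Γ).ncard := hmin _ hmoved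
    _ = ((g • Γ) \ (s • g • Γ)).ncard := hcard.symm
    _ ≤ _ := Set.ncard_le_ncard hsub

theorem ncard_compl_sdiff_smul_compl [Finite X] (Γ : Set X) (g : G) :
    (Γᶜ \ g • Γᶜ).ncard = (Γ \ g • Γ).ncard := by
  rw [Set.smul_set_compl, compl_sdiff_compl,
    ← Set.ncard_eq_ncard_iff_ncard_sdiff_eq_ncard_sdiff]
  exact Set.ncard_smul_set g Γ

theorem IsJordanSet.exists_ncard_sdiff_smul_eq_one [Finite X] [IsPretransitive G X]
    (hΓ : IsJordanSet G Γ) (hΓc : IsJordanSet G Γᶜ) (hne : Γ.Nonempty) (hcne : Γᶜ.Nonempty)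
    (hcop : Γ.ncard.Coprime Γᶜ.ncard) : ∃ g : G, (Γ \ g • Γ).ncard = 1 := by
  obtain ⟨g₀, hg₀⟩ : ∃ g : G, g • Γ ≠ Γ := by
    obtain ⟨x, hx⟩ := hne
    obtain ⟨y, hy⟩ := hcne
    obtain ⟨g, rfl⟩ := exists_smul_eq G x y
    exact ⟨g, fun h => hy (h ▸ Set.smul_mem_smul_set hx)⟩
  obtain ⟨g, hg, hgmin⟩ := exists_minimalFor_of_wellFoundedLT (fun g : G => g • Γ ≠ Γ)
    (fun g => (Γ \ g • Γ).ncard) ⟨g₀, hg₀⟩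
  have hmin (h : G) (hh : h • Γ ≠ Γ) : (Γ \ g • Γ).ncard ≤ (Γ \ h • Γ).ncard :=
    (le_total _ _).elim id (hgmin hh)
  have hpos : (Γ \ g • Γ).ncard ≠ 0 := by
    rw [Ne, Set.ncard_eq_zero, Set.sdiff_eq_empty]
    intro h
    exact hg (Set.eq_of_subset_of_ncard_le h (Set.ncard_smul_set g Γ).le).symm
  have hmin_compl (h : G) (hh : h • Γᶜ ≠ Γᶜ) :
      (Γᶜ \ g • Γᶜ).ncard ≤ (Γᶜ \ h • Γᶜ).ncard := by
    rw [Set.smul_set_compl, Ne, compl_inj_iff] at hh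
    simpa only [ncard_compl_sdiff_smul_compl] using hmin h hh
  refine ⟨g, Nat.eq_one_of_dvd_coprimes hcop ?_ ?_⟩
  · exact hΓ.ncard_dvd_of_isBlock (isBlock_sdiff_smul_of_minimal hmin)
      (Set.nonempty_of_ncard_ne_zero hpos) Set.sdiff_subset
  · rw [← ncard_compl_sdiff_smul_compl] at hpos ⊢
    exact hΓc.ncard_dvd_of_isBlock (isBlock_sdiff_smul_of_minimal hmin_compl)
      (Set.nonempty_of_ncard_ne_zero hpos) Set.sdiff_subset

theorem IsJordanSet.insert_sdiff_singleton_mem_orbit [Finite X] (hΓ : IsJordanSet G Γ)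
    (hΓc : IsJordanSet G Γᶜ) {g : G} (hg : (Γ \ g • Γ).ncard = 1) {a b : X} (ha : a ∈ Γ)
    (hb : b ∉ Γ) : insert b (Γ \ {a}) ∈ orbit G Γ := by
  have hg' : (g • Γ \ Γ).ncard = 1 := by
    rw [← hg, ← Set.ncard_eq_ncard_iff_ncard_sdiff_eq_ncard_sdiff, Set.ncard_smul_set]
  obtain ⟨a₀, ha₀⟩ := Set.ncard_eq_one.mp hg
  obtain ⟨b₀, hb₀⟩ := Set.ncard_eq_one.mp hg'
  have hgΓ : g • Γ = insert b₀ (Γ \ {a₀}) := by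
    rw [← ha₀, Set.sdiff_sdiff_right_self, ← Set.singleton_union, ← hb₀, Set.inter_comm]
    exact (Set.sdiff_union_inter _ _).symm
  obtain ⟨ha₀Γ, -⟩ : a₀ ∈ Γ \ g • Γ := by simp [ha₀]
  obtain ⟨-, hb₀Γ⟩ : b₀ ∈ g • Γ \ Γ := by simp [hb₀]
  obtain ⟨s, hs, hsa⟩ := hΓ a₀ ha₀Γ a ha
  obtain ⟨t, ht, htb⟩ := hΓc b₀ hb₀Γ b hb
  have hsb : s • b₀ = b₀ := (mem_fixingSubgroup_iff G).mp hs b₀ hb₀Γ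
  have htΓ : t • Γ = Γ := by
    simpa only [Set.smul_set_compl, compl_inj_iff] using smul_eq_of_mem_fixingSubgroup_compl ht
  rw [compl_compl] at ht
  have hta : t • a = a := (mem_fixingSubgroup_iff G).mp ht a ha
  refine ⟨t * s * g, ?_⟩
  change (t * s * g) • Γ = _
  simp only [mul_smul, hgΓ, Set.smul_set_insert, Set.smul_set_sdiff, Set.smul_set_singleton,
    smul_eq_of_mem_fixingSubgroup_compl hs, htΓ, hsa, hsb, hta, htb]

theorem IsJordanSet.mem_orbit_of_ncard_eq [Finite X] [IsPretransitive G X] (hΓ : IsJordanSet G Γ)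
    (hΓc : IsJordanSet G Γᶜ) (hne : Γ.Nonempty) (hcne : Γᶜ.Nonempty)
    (hcop : Γ.ncard.Coprime Γᶜ.ncard) {T : Set X} (hT : T.ncard = Γ.ncard) : T ∈ orbit G Γ := by
  obtain ⟨g, hg⟩ := hΓ.exists_ncard_sdiff_smul_eq_one hΓc hne hcne hcop
  refine mem_of_forall_exchange_mem ?_ (mem_orbit_self Γ) Γ.toFinite T.toFinite hT.symm
  rintro _ ⟨h, rfl⟩ a ha b hb
  have hexch := hΓ.insert_sdiff_singleton_mem_orbit hΓc hg
    (Set.mem_smul_set_iff_inv_smul_mem.mp ha) (mt Set.mem_smul_set_iff_inv_smul_mem.mpr hb)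
  simpa [Set.smul_set_insert, Set.smul_set_sdiff] using mem_orbit_of_mem_orbit h hexch

theorem isPreprimitive_of_forall_isJordanSet {m : ℕ} (hm : 1 < m) (hmX : m < Nat.card X)
    (hJ : ∀ T : Set X, T.ncard = m → IsJordanSet G T) : IsPreprimitive G X := by
  have : Finite X := Nat.finite_of_card_ne_zero (by omega)
  have hpair (x y : X) : ({x, y} : Set X).ncard ≤ m :=
    (Set.ncard_insert_le x {y}).trans (by rwa [Set.ncard_singleton])
  have : IsPretransitive G X := by
    refine ⟨fun x y => ?_⟩
    obtain ⟨T, hxyT, -, hTm⟩ := Set.exists_subsuperset_card_eq (Set.subset_univ {x, y})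
      (hpair x y) (by rw [Set.ncard_univ]; exact hmX.le)
    rw [Set.pair_subset_iff] at hxyT
    obtain ⟨g, -, hgx⟩ := hJ T hTm x hxyT.1 y hxyT.2
    exact ⟨g, hgx⟩
  refine ⟨fun {B} hB => ?_⟩
  by_contra! htriv
  obtain ⟨hBsub, hBuniv⟩ := not_or.mp htriv
  obtain ⟨x, hx, y, hy, hxy⟩ := Set.not_subsingleton_iff.mp hBsub
  obtain ⟨z, hz⟩ := (Set.ne_univ_iff_exists_notMem B).mp hBuniv
  have hyz : y ≠ z := fun h => hz (h ▸ hy)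
  obtain ⟨T, hxzT, hTy, hTm⟩ : ∃ T : Set X, {x, z} ⊆ T ∧ T ⊆ {y}ᶜ ∧ T.ncard = m := by
    refine Set.exists_subsuperset_card_eq (by simp [hxy.symm, hyz]) (hpair x z) ?_
    rw [Set.ncard_compl, Set.ncard_singleton]
    omega
  rw [Set.pair_subset_iff] at hxzT
  obtain ⟨g, hg, rfl⟩ := hJ T hTm x hxzT.1 z hxzT.2
  have hgy : g • y = y := (mem_fixingSubgroup_iff G).mp hg y fun hyT => hTy hyT rfl
  have hgB : g • B = B := isBlock_iff_smul_eq_of_mem.mp hB hy (hgy.symm ▸ hy)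
  exact hz (hgB ▸ Set.smul_mem_smul_set hx)

end JordanSet

section CycleOn

variable {X : Type*} [Finite X] {f : Equiv.Perm X} {Γ : Set X}

theorem pow_apply_eq_self_iff_ncard_dvd (hf : f.IsCycleOn Γ) {x : X} (hx : x ∈ Γ) {n : ℕ} :
    (f ^ n) x = x ↔ Γ.ncard ∣ n := by
  lift Γ to Finset X using Γ.toFinite
  simpa only [Set.ncard_coe_finset] using hf.pow_apply_eq hx

theorem isJordanSet_of_isCycleOn {G : Subgroup (Equiv.Perm X)} (hfG : f ∈ G)
    (hf : f.IsCycleOn Γ) (hfc : f.IsCycleOn Γᶜ) (hcop : Γ.ncard.Coprime Γᶜ.ncard) :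
    IsJordanSet G Γ := by
  intro x hx y hy
  obtain ⟨j, rfl⟩ := hf.exists_pow_eq' Γ.toFinite hx hy
  obtain ⟨k, hkj, hk⟩ := Nat.chineseRemainder hcop j 0
  refine ⟨⟨f ^ k, pow_mem hfG k⟩, (mem_fixingSubgroup_iff G).mpr fun z hz => ?_, ?_⟩
  · exact (pow_apply_eq_self_iff_ncard_dvd hfc hz).mpr (Nat.modEq_zero_iff_dvd.mp hk)
  · change (f ^ k) x = (f ^ j) x
    lift Γ to Finset X using Γ.toFinite
    rw [hf.pow_apply_eq_pow_apply hx, ← Set.ncard_coe_finset]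
    exact hkj

theorem pow_ncard_compl_apply_eq_self_iff (hf : f.IsCycleOn Γ) (hfc : f.IsCycleOn Γᶜ)
    (hΓ : 1 < Γ.ncard) (hcop : Γ.ncard.Coprime Γᶜ.ncard) {x : X} :
    (f ^ Γᶜ.ncard) x = x ↔ x ∉ Γ := by
  refine ⟨fun hx hxΓ => ?_, fun hx => (pow_apply_eq_self_iff_ncard_dvd hfc hx).mpr dvd_rfl⟩
  have hdvd := (pow_apply_eq_self_iff_ncard_dvd hf hxΓ).mp hx
  exact hΓ.ne' (hcop.eq_one_of_dvd hdvd)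

end CycleOn

section AlternatingGroup

variable {X : Type*} [Fintype X] [DecidableEq X] {G : Subgroup (Equiv.Perm X)}
  {f : Equiv.Perm X} {Γ : Set X}

theorem isThreeCycle_commutator {c c' : Equiv.Perm X} {p : X} (hc : c p ≠ p) (hc' : c' p ≠ p)
    (hcc' : ∀ x ≠ p, c x = x ∨ c' x = x) : ⁅c, c'⁆.IsThreeCycle := by
  have hcp : c' (c p) = c p := (hcc' (c p) hc).resolve_left fun h => hc (c.injective h)
  -- Multiplying by the transposition removes `p`, the only common point, from the support of `c`.
  have hdisj : (Equiv.swap p (c p) * c).Disjoint c' := by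
    intro x
    rw [Equiv.Perm.mul_apply]
    by_cases hxp : x = p
    · exact .inl (by rw [hxp, Equiv.swap_apply_right])
    by_cases hx : c' x = x
    · exact .inr hx
    · rw [(hcc' x hxp).resolve_right hx]
      exact .inl (Equiv.swap_apply_of_ne_of_ne hxp fun h => hx (h ▸ hcp))
  have hconj : c * c' * c⁻¹ = Equiv.swap p (c p) * c' * Equiv.swap p (c p) := by
    rw [mul_inv_eq_iff_eq_mul, mul_assoc, mul_assoc, ← hdisj.commute.eq, mul_assoc,
      Equiv.swap_mul_self_mul]
  have hcomm : ⁅c, c'⁆ = Equiv.swap (c p) p * Equiv.swap (c p) (c' p) :=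
    calc
      ⁅c, c'⁆ = Equiv.swap p (c p) * (c' * Equiv.swap p (c p) * c'⁻¹) := by
          rw [commutatorElement_def, hconj]; group
      _ = Equiv.swap (c p) p * Equiv.swap (c p) (c' p) := by
          rw [← Equiv.swap_apply_apply, hcp, Equiv.swap_comm p, Equiv.swap_comm (c' p)]
  rw [hcomm]
  refine Equiv.Perm.isThreeCycle_swap_mul_swap_same hc ?_ hc'.symm
  exact fun h => hc (c'.injective (hcp.trans h))

theorem exists_isThreeCycle_mem (hfG : f ∈ G) (hf : f.IsCycleOn Γ) (hfc : f.IsCycleOn Γᶜ)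
    (hΓ : 1 < Γ.ncard) (hcop : Γ.ncard.Coprime Γᶜ.ncard) {g : Equiv.Perm X} (hg : g ∈ G) {p : X}
    (hp : Γ ∩ g • Γ = {p}) : ∃ σ ∈ G, σ.IsThreeCycle := by
  let c := f ^ Γᶜ.ncard
  let c' := g * c * g⁻¹
  have hc {x : X} : c x = x ↔ x ∉ Γ := pow_ncard_compl_apply_eq_self_iff hf hfc hΓ hcop
  have hc' {x : X} : c' x = x ↔ x ∉ g • Γ := by
    rw [Set.mem_smul_set_iff_inv_smul_mem, Equiv.Perm.smul_def, ← hc,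
      Equiv.Perm.eq_inv_iff_eq]
    rfl
  have hcG : c ∈ G := pow_mem hfG _
  have hc'G : c' ∈ G := mul_mem (mul_mem hg hcG) (inv_mem hg)
  obtain ⟨hpΓ, hpg⟩ : p ∈ Γ ∩ g • Γ := by simp [hp]
  refine ⟨⁅c, c'⁆, mul_mem (mul_mem (mul_mem hcG hc'G) (inv_mem hcG)) (inv_mem hc'G),
    isThreeCycle_commutator (p := p) (by rwa [Ne, hc, not_not]) (by rwa [Ne, hc', not_not]) ?_⟩
  intro x hx
  rw [hc, hc', ← not_and_or]
  exact fun hxΓ => hx (hp.subset hxΓ)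

theorem alternatingGroup_le_of_isCycleOn_of_ncard_le [IsPretransitive G X] (hfG : f ∈ G)
    (hf : f.IsCycleOn Γ) (hfc : f.IsCycleOn Γᶜ) (hΓ : 1 < Γ.ncard)
    (hle : Γ.ncard ≤ Γᶜ.ncard) (hcop : Γ.ncard.Coprime Γᶜ.ncard) : alternatingGroup X ≤ G := by
  have hJ : IsJordanSet G Γ := isJordanSet_of_isCycleOn hfG hf hfc hcop
  have hJc : IsJordanSet G Γᶜ := isJordanSet_of_isCycleOn hfG hfc (by rwa [compl_compl])
    (by rwa [compl_compl, Nat.coprime_comm])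
  have hne : Γ.Nonempty := Set.nonempty_of_ncard_ne_zero (by omega)
  have hcne : Γᶜ.Nonempty := Set.nonempty_of_ncard_ne_zero (by omega)
  have hcard : Γ.ncard + Γᶜ.ncard = Nat.card X := Set.ncard_add_ncard_compl Γ
  have hprim : IsPreprimitive G X := by
    refine isPreprimitive_of_forall_isJordanSet hΓ (by omega) fun T hT => ?_
    obtain ⟨g, rfl⟩ := hJ.mem_orbit_of_ncard_eq hJc hne hcne hcop hT
    exact hJ.smul g
  obtain ⟨p, hp⟩ := hne
  obtain ⟨T, hTΓ, hT⟩ := Set.exists_subset_card_eq (s := Γᶜ) (n := Γ.ncard - 1) (by omega)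
  have hpT : p ∉ T := fun h => hTΓ h hp
  obtain ⟨⟨g, hg⟩, hgΓ : g • Γ = insert p T⟩ := hJ.mem_orbit_of_ncard_eq hJc ⟨p, hp⟩ hcne hcop
    (T := insert p T) (by rw [Set.ncard_insert_of_notMem hpT]; omega)
  have hinter : Γ ∩ g • Γ = {p} := by
    rw [hgΓ, Set.inter_insert_of_mem hp, (disjoint_compl_right.mono_right hTΓ).inter_eq]
    exact insert_empty_eq p
  obtain ⟨σ, hσG, hσ⟩ := exists_isThreeCycle_mem hfG hf hfc hΓ hcop hg hinter
  exact Equiv.Perm.alternatingGroup_le_of_isPreprimitive_of_isThreeCycle_mem hprim hσ hσG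

theorem eq_top_or_eq_alternatingGroup_of_le (hG : alternatingGroup X ≤ G) :
    G = ⊤ ∨ G = alternatingGroup X := by
  cases subsingleton_or_nontrivial X
  · exact .inl (Subsingleton.elim G ⊤)
  · have hdvd : G.index ∣ 2 :=
      alternatingGroup.index_eq_two (α := X) ▸ Subgroup.index_dvd_of_le hG
    rcases (Nat.dvd_prime Nat.prime_two).mp hdvd with h | h
    · exact .inl (Subgroup.index_eq_one.mp h)
    · exact .inr (Equiv.Perm.eq_alternatingGroup_of_index_eq_two h)

end AlternatingGroup

section CycleDecomp

variable {d : ℕ} {α : Equiv.Perm (Fin d)}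

theorem IsCycleDecompOn.isCycleOn {l : ℕ} {S : Fin l → Set (Fin d)} (hS : IsCycleDecompOn α S)
    (i : Fin l) : α.IsCycleOn (S i) := by
  obtain ⟨a, ha⟩ := hS.2 i
  have hmem (x : Fin d) : x ∈ S i ↔ α.SameCycle a x := by
    rw [ha]
    exact ⟨fun ⟨k, hk⟩ => ⟨k, hk⟩, fun h => h.exists_nat_pow_eq⟩
  refine ⟨α.bijOn fun x => ?_, fun x hx y hy => ((hmem x).mp hx).symm.trans ((hmem y).mp hy)⟩
  rw [hmem, hmem, Equiv.Perm.sameCycle_apply_right]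

theorem IsCycleDecompOn.compl_zero {S : Fin 2 → Set (Fin d)} (hS : IsCycleDecompOn α S) :
    (S 0)ᶜ = S 1 := by
  ext x
  obtain ⟨i, hi, huniq⟩ := hS.1 x
  have hmem (j : Fin 2) : x ∈ S j ↔ j = i := ⟨huniq j, fun h => h ▸ hi⟩
  rw [Set.mem_compl_iff, hmem, hmem]
  omega

end CycleDecomp

theorem l_eq_two_sym_or_alt {n₁ n₂ d : ℕ} (h₁ : 1 < n₁) (h₂ : 1 < n₂)
    (hcop : Nat.gcd n₁ n₂ = 1) (hd : d = n₁ + n₂)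
    (G : Subgroup (Equiv.Perm (Fin d))) (hG : IsTransitiveSub G)
    (α : Equiv.Perm (Fin d)) (hα : α ∈ G)
    (S : Fin 2 → Set (Fin d)) (hdecomp : IsCycleDecompOn α S)
    (hS0 : (S 0).ncard = n₁) (hS1 : (S 1).ncard = n₂) :
    G = ⊤ ∨ G = alternatingGroup (Fin d) := by
  have hcycle := hdecomp.isCycleOn
  have hcompl₀ : (S 0)ᶜ = S 1 := hdecomp.compl_zero
  have hcompl₁ : (S 1)ᶜ = S 0 := by rw [← hcompl₀, compl_compl]
  have : IsPretransitive G (Fin d) :=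
    ⟨fun i j => let ⟨g, hg, hgij⟩ := hG i j; ⟨⟨g, hg⟩, hgij⟩⟩
  apply eq_top_or_eq_alternatingGroup_of_le
  rcases le_total n₁ n₂ with hle | hle
  · exact alternatingGroup_le_of_isCycleOn_of_ncard_le hα (hcycle 0) (hcompl₀ ▸ hcycle 1)
      (hS0 ▸ h₁) (by rwa [hcompl₀, hS0, hS1]) (by rwa [hcompl₀, hS0, hS1])
  · exact alternatingGroup_le_of_isCycleOn_of_ncard_le hα (hcycle 1) (hcompl₁ ▸ hcycle 0)
      (hS1 ▸ h₂) (by rwa [hcompl₁, hS0, hS1]) (by rwa [hcompl₁, hS0, hS1, Nat.coprime_comm])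
end

section
/- For every integer N there exists an integer d > N and a subgroup G of the symmetric group Σ_d on Ω_d = {1,…,d} such that: G acts transitively and primitively on Ω_d, G is neither the full symmetric group Σ_d nor the alternating group A_d, and G contains a permutation α which fixes exactly one point of Ω_d and permutes the remaining d − 1 points in a single (d−1)-cycle. -/
/-! The affine group of a field `K` is sharply 2-transitive on `K`. Being 2-transitive, it is
primitive; being sharply so, its only element fixing `0` and `1` is the identity, whereas for
`5 ≤ |K|` some nontrivial even permutation fixes both. When `K` is finite, multiplication by a
generator of the cyclic group `Kˣ` fixes `0` and permutes the other elements in a single cycle.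
Every prime power `q` is a possible degree: `Fin q` is made into a field, so that no transport of
permutations from `K` to `Fin q` is needed. -/

open Equiv MulAction

/-- The subgroup of `Perm R` formed by the affine maps `x ↦ u * x + b` with `u` a unit, i.e.
the group `AGL(1, R)` in its natural action on `R`. -/
def affineGroup (R : Type*) [Ring R] : Subgroup (Perm R) where
  carrier := {g | ∃ (u : Rˣ) (b : R), ∀ x, g x = u * x + b}
  one_mem' := ⟨1, 0, fun x => by simp⟩
  mul_mem' := by
    rintro g h ⟨u, b, hg⟩ ⟨v, c, hh⟩
    refine ⟨u * v, u * c + b, fun x => ?_⟩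
    rw [Perm.mul_apply, hg, hh, Units.val_mul, mul_add, mul_assoc, add_assoc]
  inv_mem' := by
    rintro g ⟨u, b, hg⟩
    refine ⟨u⁻¹, -(↑u⁻¹ * b), fun x => ?_⟩
    rw [Perm.inv_eq_iff_eq, hg, mul_add, mul_neg, Units.mul_inv_cancel_left,
      Units.mul_inv_cancel_left, neg_add_cancel_right]

section Ring

variable {R : Type*} [Ring R]

theorem toPerm_mem_affineGroup (u : Rˣ) : (toPerm u : Perm R) ∈ affineGroup R :=
  ⟨u, 0, fun x => by rw [toPerm_apply, Units.smul_def, smul_eq_mul, add_zero]⟩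

theorem eq_one_of_mem_affineGroup_of_apply_zero_of_apply_one {g : Perm R}
    (hg : g ∈ affineGroup R) (h0 : g 0 = 0) (h1 : g 1 = 1) : g = 1 := by
  obtain ⟨u, b, hg⟩ := hg
  have hb : b = 0 := by simpa [h0] using (hg 0).symm
  have hu : (u : R) = 1 := by simpa [h1, hb] using (hg 1).symm
  ext x
  simp [hg, hu, hb]

end Ring

section DivisionRing

variable (K : Type*) [DivisionRing K]

theorem isMultiplyPretransitive_two_affineGroup :
    IsMultiplyPretransitive (affineGroup K) K 2 := by
  rw [is_two_pretransitive_iff]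
  intro a b c d hab hcd
  have hba : b - a ≠ 0 := sub_ne_zero.2 hab.symm
  let u : Kˣ := Units.mk0 ((d - c) / (b - a)) (div_ne_zero (sub_ne_zero.2 hcd.symm) hba)
  have hu : (u : K) * (b - a) = d - c := div_mul_cancel₀ _ hba
  let g : Perm K := (toPerm u).trans (Equiv.addRight (c - u * a))
  refine ⟨⟨g, u, c - u * a, fun _ => rfl⟩, ?_, ?_⟩
  · change (u : K) * a + (c - u * a) = c
    exact add_sub_cancel _ _
  · change (u : K) * b + (c - u * a) = d
    rw [add_sub_left_comm, ← mul_sub, hu, add_sub_cancel]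

theorem isPreprimitive_affineGroup : IsPreprimitive (affineGroup K) K :=
  isPreprimitive_of_is_two_pretransitive (isMultiplyPretransitive_two_affineGroup K)

end DivisionRing

section Alternating

variable {α : Type*} [Fintype α] [DecidableEq α]

theorem exists_mem_alternatingGroup_ne_one_fixing_finset {s : Finset α}
    (hs : s.card + 3 ≤ Fintype.card α) :
    ∃ g ∈ alternatingGroup α, g ≠ 1 ∧ ∀ x ∈ s, g x = x := by
  have hcard : 3 ≤ Nat.card {x // x ∉ s} := by
    rw [Nat.card_eq_fintype_card, Fintype.card_subtype_compl, Fintype.card_coe]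
    omega
  have := alternatingGroup.nontrivial_of_three_le_card hcard
  obtain ⟨g, hg⟩ := exists_ne (1 : alternatingGroup {x // x ∉ s})
  refine ⟨Perm.ofSubtype (g : Perm {x // x ∉ s}), ?_, ?_, fun x hx => ?_⟩
  · rw [Perm.mem_alternatingGroup, Perm.sign_ofSubtype]
    exact g.2
  · rw [ne_eq, map_eq_one_iff _ Perm.ofSubtype_injective]
    exact fun h => hg (Subtype.ext h)
  · exact Perm.ofSubtype_apply_of_not_mem _ (not_not.2 hx)

theorem not_alternatingGroup_le_affineGroup [Ring α] (h : 5 ≤ Fintype.card α) :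
    ¬ alternatingGroup α ≤ affineGroup α := by
  intro hle
  have hcard : ({0, 1} : Finset α).card + 3 ≤ Fintype.card α :=
    (Nat.add_le_add_right Finset.card_le_two 3).trans h
  obtain ⟨g, hg, hne, hfix⟩ := exists_mem_alternatingGroup_ne_one_fixing_finset hcard
  exact hne (eq_one_of_mem_affineGroup_of_apply_zero_of_apply_one (hle hg)
    (hfix 0 (by simp)) (hfix 1 (by simp)))

end Alternating

section GroupWithZero

variable {G₀ : Type*} [GroupWithZero G₀] {u : G₀ˣ}

theorem units_smul_ne_self_iff (hu : u ≠ 1) {x : G₀} : u • x ≠ x ↔ x ≠ 0 := by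
  rw [Units.smul_def, smul_eq_mul, ne_eq, mul_left_eq_self₀, Units.val_eq_one, or_iff_right hu]

theorem isCycle_toPerm_of_forall_mem_zpowers (hu : u ≠ 1)
    (hgen : ∀ v, v ∈ Subgroup.zpowers u) : (toPerm u : Perm G₀).IsCycle := by
  refine ⟨1, (units_smul_ne_self_iff hu).2 one_ne_zero, fun y hy => ?_⟩
  obtain ⟨k, hk⟩ := hgen (Units.mk0 y ((units_smul_ne_self_iff hu).1 hy))
  replace hk : u ^ k = Units.mk0 y _ := hk
  refine ⟨k, ?_⟩
  calc
    ((toPermHom G₀ˣ G₀ u) ^ k) 1 = (u ^ k) • 1 := by rw [← map_zpow]; rfl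
    _ = y := by rw [hk, Units.smul_mk0, smul_eq_mul, mul_one]

theorem support_toPerm_units [Fintype G₀] [DecidableEq G₀] (hu : u ≠ 1) :
    (toPerm u : Perm G₀).support = {0}ᶜ := by
  ext x
  rw [Perm.mem_support, toPerm_apply, units_smul_ne_self_iff hu, Finset.mem_compl,
    Finset.mem_singleton]

end GroupWithZero

theorem exists_mem_affineGroup_isCycle_support_eq (K : Type*) [Field K] [Fintype K]
    [DecidableEq K] (hK : 2 < Fintype.card K) :
    ∃ α ∈ affineGroup K, ∃ a, α a = a ∧ α.IsCycle ∧ α.support = {a}ᶜ := by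
  have : Nontrivial Kˣ :=
    Fintype.one_lt_card_iff_nontrivial.1 (by rw [Fintype.card_units]; omega)
  obtain ⟨u, hgen⟩ := IsCyclic.exists_generator (α := Kˣ)
  have hu : u ≠ 1 := by
    rintro rfl
    obtain ⟨v, hv⟩ := exists_ne (1 : Kˣ)
    exact hv (by simpa using hgen v)
  exact ⟨toPerm u, toPerm_mem_affineGroup u, 0, smul_zero u,
    isCycle_toPerm_of_forall_mem_zpowers hu hgen, support_toPerm_units hu⟩

theorem isPrimitiveSub_of_isPreprimitive {d : ℕ} {G : Subgroup (Perm (Fin d))}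
    (hG : IsPreprimitive G (Fin d)) : IsPrimitiveSub G := by
  refine ⟨fun i j => ?_, fun A hA => ?_⟩
  · obtain ⟨g, hg⟩ := exists_smul_eq G i j
    exact ⟨g, g.2, hg⟩
  · have hblock : IsBlock G A := isBlock_iff_smul_eq_or_disjoint.2 fun g =>
      (hA g g.2).imp_right Set.disjoint_iff_inter_eq_empty.2
    rcases hG.isTrivialBlock_of_isBlock hblock with hsub | huniv
    · exact hsub.eq_empty_or_singleton.imp_right Or.inl
    · exact Or.inr (Or.inr huniv)

theorem exists_isPrimitiveSub_of_isPrimePow {q : ℕ} (hq : IsPrimePow q) (h5 : 5 ≤ q) :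
    ∃ G : Subgroup (Perm (Fin q)),
      IsPrimitiveSub G ∧ G ≠ ⊤ ∧ G ≠ alternatingGroup (Fin q) ∧
      ∃ α ∈ G, ∃ a : Fin q, α a = a ∧ α.IsCycle ∧ α.support = {a}ᶜ := by
  rw [← Fintype.card_fin q] at hq h5
  obtain ⟨_⟩ : Nonempty (Field (Fin q)) := Fintype.nonempty_field_iff.2 hq
  have hA := not_alternatingGroup_le_affineGroup h5
  exact ⟨affineGroup (Fin q), isPrimitiveSub_of_isPreprimitive (isPreprimitive_affineGroup _),
    fun h => hA (h ▸ le_top), fun h => hA h.ge,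
    exists_mem_affineGroup_isCycle_support_eq (Fin q) (by omega)⟩

theorem infinitely_many_primitive_not_sym_not_alt :
    ∀ N : ℕ, ∃ d : ℕ, N < d ∧ ∃ G : Subgroup (Equiv.Perm (Fin d)),
      IsPrimitiveSub G ∧ G ≠ ⊤ ∧ G ≠ alternatingGroup (Fin d) ∧
      ∃ α ∈ G, ∃ a : Fin d, α a = a ∧ α.IsCycle ∧ α.support = {a}ᶜ := by
  intro N
  obtain ⟨p, hNp, hp⟩ := Nat.exists_infinite_primes (N + 5)
  exact ⟨p, by omega, exists_isPrimitiveSub_of_isPrimePow hp.isPrimePow (by omega)⟩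
end

section
/- For every even integer d ≥ 4, the subgroup of Σ_d generated by the (d−1)-cycle α = (2 3 … d) and the permutation β = (1 2)(3 4) is the alternating group A_d. -/
/-!
The stabilizer of the first point is transitive on the other points, since it contains `α`; as `β`
moves the first point, the group is 2-transitive, hence primitive. By Jordan's theorem it contains
the alternating group as soon as it contains a 3-cycle. If `d = 4`, then `α` is one. If `d ≥ 6`,
number the points from `0` and put `β₁ = α β α⁻¹ = (0 2)(3 4)` and `β₂ = α β₁ α⁻¹ = (0 3)(4 5)`:
then `β₂ β₁ β₂⁻¹ = (3 2)(0 5)` shares a transposition with `β = (0 1)(2 3)`, so the product of these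
two is a 3-cycle. Both generators are even permutations, `α` because `d - 1` is odd.
-/

open Equiv Equiv.Perm MulAction

section MultipleTransitivity

theorem isMultiplyPretransitive_two_of_isPretransitive_ofStabilizer {G X : Type*} [Group G]
    [MulAction G X] {z : X} (hz : z ∉ fixedPoints G X)
    (hstab : IsPretransitive (stabilizer G z) (SubMulAction.ofStabilizer G z)) :
    IsMultiplyPretransitive G X 2 := by
  obtain ⟨g, hg⟩ : ∃ g : G, g • z ≠ z := by simpa only [mem_fixedPoints, not_forall] using hz
  have htrans : IsPretransitive G X := by
    rw [isPretransitive_iff_base z]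
    intro y
    by_cases hy : y = z
    · exact ⟨1, by rw [one_smul, hy]⟩
    · obtain ⟨k, hk⟩ := hstab.exists_smul_eq ⟨g • z, hg⟩ ⟨y, hy⟩
      exact ⟨k * g, by rw [mul_smul]; exact congrArg Subtype.val hk⟩
  exact SubMulAction.ofStabilizer.isMultiplyPretransitive.mpr (is_one_pretransitive_iff.mpr hstab)

theorem apply_eq_self_of_isCycleOn_compl {X : Type*} {σ : Perm X} {z : X}
    (hσ : σ.IsCycleOn {z}ᶜ) : σ z = z := by
  simpa using hσ.apply_mem_iff (x := z)

theorem isPretransitive_ofStabilizer_of_isCycleOn_compl_mem {X : Type*} {G : Subgroup (Perm X)}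
    {σ : Perm X} {z : X} (hσ : σ.IsCycleOn {z}ᶜ) (hσG : σ ∈ G) :
    IsPretransitive (stabilizer G z) (SubMulAction.ofStabilizer G z) := by
  have hz : σ z = z := apply_eq_self_of_isCycleOn_compl hσ
  refine ⟨fun ⟨x, hx⟩ ⟨y, hy⟩ ↦ ?_⟩
  obtain ⟨k, hk⟩ := hσ.2 hx hy
  exact ⟨⟨⟨σ ^ k, G.zpow_mem hσG k⟩, zpow_apply_eq_self_of_apply_eq_self hz k⟩, Subtype.ext hk⟩

end MultipleTransitivity

section ThreeCycles

variable {X : Type*} [DecidableEq X]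

theorem conj_swap_mul_swap (σ : Perm X) (a b c d : X) :
    σ * (swap a b * swap c d) * σ⁻¹ = swap (σ a) (σ b) * swap (σ c) (σ d) := by
  rw [← conj_mul, ← swap_apply_apply, ← swap_apply_apply]

theorem isThreeCycle_formPerm_of_length_eq_three [Fintype X] {l : List X} (hl : l.Nodup)
    (hlen : l.length = 3) : l.formPerm.IsThreeCycle := by
  obtain ⟨a, b, c, rfl⟩ := List.length_eq_three.mp hlen
  obtain ⟨⟨hab, hac⟩, hbc⟩ : (a ≠ b ∧ a ≠ c) ∧ b ≠ c := by simpa using hl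
  rw [List.formPerm_cons_cons, List.formPerm_pair, swap_comm a b]
  exact isThreeCycle_swap_mul_swap_same hab.symm hbc hac

theorem conj_double_swap_mul_double_swap {x : Fin 6 → X} (hx : x.Injective) :
    (swap (x 0) (x 3) * swap (x 4) (x 5)) * (swap (x 0) (x 2) * swap (x 3) (x 4)) *
        (swap (x 0) (x 3) * swap (x 4) (x 5))⁻¹ * (swap (x 0) (x 1) * swap (x 2) (x 3)) =
      swap (x 0) (x 5) * swap (x 0) (x 1) := by
  have hconj : (swap (x 0) (x 3) * swap (x 4) (x 5)) * (swap (x 0) (x 2) * swap (x 3) (x 4)) *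
      (swap (x 0) (x 3) * swap (x 4) (x 5))⁻¹ = swap (x 2) (x 3) * swap (x 0) (x 5) := by
    rw [conj_swap_mul_swap]
    simp [swap_apply_def, hx.eq_iff, swap_comm]
  calc
    _ = swap (x 2) (x 3) * (swap (x 0) (x 5) * swap (x 0) (x 1)) * (swap (x 2) (x 3))⁻¹ := by
      rw [hconj, swap_inv, ← mul_assoc, ← mul_assoc]
    _ = swap (x 0) (x 5) * swap (x 0) (x 1) := by
      rw [conj_swap_mul_swap]
      simp [swap_apply_def, hx.eq_iff]

theorem exists_isThreeCycle_mem_of_double_swap_mem [Fintype X] {G : Subgroup (Perm X)}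
    {σ : Perm X} {x : Fin 6 → X} (hx : x.Injective) (hσ : σ ∈ G)
    (hβ : swap (x 0) (x 1) * swap (x 2) (x 3) ∈ G) (h0 : σ (x 0) = x 0) (h1 : σ (x 1) = x 2)
    (h2 : σ (x 2) = x 3) (h3 : σ (x 3) = x 4) (h4 : σ (x 4) = x 5) :
    ∃ g ∈ G, g.IsThreeCycle := by
  have conj_mem {ρ τ : Perm X} (hρ : ρ ∈ G) (hτ : τ ∈ G) : ρ * τ * ρ⁻¹ ∈ G :=
    G.mul_mem (G.mul_mem hρ hτ) (G.inv_mem hρ)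
  have hβ₁ : swap (x 0) (x 2) * swap (x 3) (x 4) ∈ G := by
    simpa only [conj_swap_mul_swap, h0, h1, h2, h3] using conj_mem hσ hβ
  have hβ₂ : swap (x 0) (x 3) * swap (x 4) (x 5) ∈ G := by
    simpa only [conj_swap_mul_swap, h0, h2, h3, h4] using conj_mem hσ hβ₁
  refine ⟨swap (x 0) (x 5) * swap (x 0) (x 1), ?_, ?_⟩
  · rw [← conj_double_swap_mul_double_swap hx]
    exact G.mul_mem (conj_mem hβ₂ hβ₁) hβ
  · exact isThreeCycle_swap_mul_swap_same (hx.ne (by decide)) (hx.ne (by decide))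
      (hx.ne (by decide))

end ThreeCycles

section Parity

variable {X : Type*} [DecidableEq X] [Fintype X]

theorem sign_formPerm_of_nodup : ∀ {l : List X}, l.Nodup →
    sign l.formPerm = (-1) ^ (l.length - 1)
  | [], _ => by simp
  | [_], _ => by simp
  | a :: b :: l, hl => by
    have hab : a ≠ b := fun h ↦ (List.nodup_cons.mp hl).1 (h ▸ List.mem_cons_self)
    rw [List.formPerm_cons_cons, Perm.sign_mul, sign_swap hab, sign_formPerm_of_nodup hl.of_cons]
    simp [pow_succ']

theorem double_swap_mem_alternatingGroup {a b c d : X} (hab : a ≠ b) (hcd : c ≠ d) :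
    swap a b * swap c d ∈ alternatingGroup X := by
  simp [mem_alternatingGroup, sign_swap hab, sign_swap hcd]

end Parity

section TailFinRange

variable {d : ℕ}

theorem map_range_succ_mod_eq_tail_finRange (hd : 0 < d) :
    (List.range (d - 1)).map (fun i ↦ (⟨(i + 1) % d, Nat.mod_lt _ hd⟩ : Fin d)) =
      (List.finRange d).tail := by
  refine List.ext_getElem (by simp) fun i hi _ ↦ ?_
  have hid : i + 1 < d := by
    rw [List.length_map, List.length_range] at hi
    omega
  simp [Nat.mod_eq_of_lt hid]

theorem nodup_tail_finRange : (List.finRange d).tail.Nodup :=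
  (List.nodup_finRange d).tail

theorem mem_tail_finRange {x : Fin d} : x ∈ (List.finRange d).tail ↔ (x : ℕ) ≠ 0 := by
  cases d with
  | zero => exact x.elim0
  | succ n => simp [List.finRange_succ, Fin.exists_succ_eq]

theorem isCycleOn_formPerm_tail_finRange (hd : 0 < d) :
    (List.finRange d).tail.formPerm.IsCycleOn {⟨0, hd⟩}ᶜ := by
  convert nodup_tail_finRange.isCycleOn_formPerm using 1
  ext x
  simp [mem_tail_finRange, Fin.ext_iff]

theorem formPerm_tail_finRange_apply {i : ℕ} (hi : i ≠ 0) (hid : i + 1 < d) :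
    (List.finRange d).tail.formPerm ⟨i, by omega⟩ = ⟨i + 1, hid⟩ := by
  obtain ⟨j, rfl⟩ := Nat.exists_eq_succ_of_ne_zero hi
  have hj : j + 1 < (List.finRange d).tail.length := by
    rw [List.length_tail, List.length_finRange]
    omega
  simpa using List.formPerm_apply_lt_getElem _ nodup_tail_finRange j hj

theorem formPerm_tail_finRange_mem_alternatingGroup (hev : Even d) :
    (List.finRange d).tail.formPerm ∈ alternatingGroup (Fin d) := by
  rw [mem_alternatingGroup, sign_formPerm_of_nodup nodup_tail_finRange, List.length_tail,
    List.length_finRange]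
  exact Even.neg_one_pow (by grind)

theorem exists_isThreeCycle_mem_of_formPerm_tail_finRange_mem (hd : 4 ≤ d) (hev : Even d)
    {G : Subgroup (Perm (Fin d))} (hα : (List.finRange d).tail.formPerm ∈ G)
    (hβ : swap (Fin.castLE hd 0) (Fin.castLE hd 1) *
      swap (Fin.castLE hd 2) (Fin.castLE hd 3) ∈ G) :
    ∃ g ∈ G, g.IsThreeCycle := by
  obtain rfl | hd6 : d = 4 ∨ 6 ≤ d := by grind
  · exact ⟨_, hα, isThreeCycle_formPerm_of_length_eq_three nodup_tail_finRange (by simp)⟩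
  · exact exists_isThreeCycle_mem_of_double_swap_mem (Fin.castLE_injective hd6) hα hβ
      (apply_eq_self_of_isCycleOn_compl (isCycleOn_formPerm_tail_finRange (by omega)))
      (formPerm_tail_finRange_apply one_ne_zero (by omega))
      (formPerm_tail_finRange_apply two_ne_zero (by omega))
      (formPerm_tail_finRange_apply three_ne_zero (by omega))
      (formPerm_tail_finRange_apply four_ne_zero (by omega))

end TailFinRange

theorem cycle_and_double_transposition_generate_alternating (d : ℕ) (hd : 4 ≤ d)
    (hev : Even d) :
    Subgroup.closure
        { ((List.range (d - 1)).map
            (fun i => (⟨(i + 1) % d, Nat.mod_lt _ (by omega)⟩ : Fin d))).formPerm,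
          Equiv.swap (⟨0, by omega⟩ : Fin d) (⟨1, by omega⟩ : Fin d) *
            Equiv.swap (⟨2, by omega⟩ : Fin d) (⟨3, by omega⟩ : Fin d) } =
      alternatingGroup (Fin d) := by
  rw [map_range_succ_mod_eq_tail_finRange (by omega)]
  set α := (List.finRange d).tail.formPerm
  set β := swap (⟨0, by omega⟩ : Fin d) ⟨1, by omega⟩ * swap ⟨2, by omega⟩ ⟨3, by omega⟩ with hβ
  set G := Subgroup.closure {α, β}
  have hαG : α ∈ G := Subgroup.subset_closure (by simp)
  have hβG : β ∈ G := Subgroup.subset_closure (by simp)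
  refine le_antisymm ?_ ?_
  · rw [Subgroup.closure_le, Set.pair_subset_iff]
    exact ⟨formPerm_tail_finRange_mem_alternatingGroup hev,
      double_swap_mem_alternatingGroup (by simp) (by simp)⟩
  · have hβ0 : (⟨0, by omega⟩ : Fin d) ∉ fixedPoints G (Fin d) := fun h ↦
      absurd (h ⟨β, hβG⟩) (by simp [hβ, Subgroup.smul_def, swap_apply_def])
    have hprim : IsPreprimitive G (Fin d) := isPreprimitive_of_is_two_pretransitive <|
      isMultiplyPretransitive_two_of_isPretransitive_ofStabilizer hβ0 <|
        isPretransitive_ofStabilizer_of_isCycleOn_compl_mem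
          (isCycleOn_formPerm_tail_finRange (by omega)) hαG
    obtain ⟨g, hg, hg3⟩ := exists_isThreeCycle_mem_of_formPerm_tail_finRange_mem hd hev hαG hβG
    exact alternatingGroup_le_of_isPreprimitive_of_isThreeCycle_mem hprim hg3 hg
end
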